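/- (Passivity of the lumped FrBD_{n+1}-GM model.) Let ε ≥ 0, let v_r : [0,T] → ℝ² be continuous, and let z, f_1, …, f_n : [0,T] → ℝ² be differentiable functions satisfying the lumped FrBD_{n+1}-GM ODE system on (0,T). Define the storage function W(t) := ½ z(t)ᵀ K₀ z(t) + ½ Σ_{i=1}^n f_i(t)ᵀ K_i⁻¹ f_i(t) and the total force f := K₀ z + Σ_{i=1}^n f_i. Then W is differentiable on (0,T) with W′(t) ≤ −f(t)ᵀ v_r(t) for every t ∈ (0,T); consequently W(t) − W(0) ≤ ∫₀ᵗ (−f(t′)ᵀ v_r(t′)) dt′ for all t ∈ [0,T]. -/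

import Mathlib

open Matrix MeasureTheory

/-- The regularised Euclidean norm `‖y‖_{2,ε} = √(‖y‖₂² + ε)` on `ℝ²`. -/
noncomputable def regNorm (ε : ℝ) (y : Fin 2 → ℝ) : ℝ := Real.sqrt (y ⬝ᵥ y + ε)

/-- The right-hand side of the bristle equation of the lumped FrBD models:
`ż = −M(v_r)⁻² ‖M(v_r) v_r‖_{2,ε} F − v_r`, where `F` is the total bristle force. -/
noncomputable def zRhs (M : (Fin 2 → ℝ) → Matrix (Fin 2) (Fin 2) ℝ) (ε : ℝ)
    (vr F : Fin 2 → ℝ) : Fin 2 → ℝ :=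
  -(regNorm ε ((M vr).mulVec vr) • ((M vr * M vr)⁻¹.mulVec F)) - vr

/-!
The derivative of a quadratic form `½ x ⬝ᵥ A *ᵥ x` with symmetric `A` along a curve is
`x ⬝ᵥ A *ᵥ x'`. The weights `K₀` and `(K i)⁻¹` of the storage function make its derivative equal to
`F ⬝ᵥ z'`, where `F` is the bristle force, minus the power `∑ i, f i ⬝ᵥ (C i)⁻¹ *ᵥ f i ≥ 0`
dissipated in the dampers. The bristle equation has the form `z' = -(R *ᵥ F) - v` with `R` positive
semidefinite, so `F ⬝ᵥ z' ≤ -(F ⬝ᵥ v)`. Integrating this differential inequality yields the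
integral one.
-/

theorem dotProduct_mulVec_eq_mulVec_dotProduct_of_isSymm {α d : Type*} [CommSemiring α] [Fintype d]
    {A : Matrix d d α} (hA : A.IsSymm) (x y : d → α) : x ⬝ᵥ A *ᵥ y = A *ᵥ x ⬝ᵥ y := by
  rw [dotProduct_mulVec, ← mulVec_transpose, hA.eq]

theorem dotProduct_mulVec_nonneg_of_posSemidef {d : Type*} [Fintype d] {A : Matrix d d ℝ}
    (hA : A.PosSemidef) (x : d → ℝ) : 0 ≤ x ⬝ᵥ A *ᵥ x := by
  simpa only [star_trivial] using hA.dotProduct_mulVec_nonneg x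

section Calculus

variable {𝕜 d : Type*} [NontriviallyNormedField 𝕜] [Fintype d]

theorem hasDerivAt_dotProduct {x y : 𝕜 → d → 𝕜} {x' y' : d → 𝕜} {t : 𝕜}
    (hx : HasDerivAt x x' t) (hy : HasDerivAt y y' t) :
    HasDerivAt (fun s => x s ⬝ᵥ y s) (x' ⬝ᵥ y t + x t ⬝ᵥ y') t := by
  simp only [dotProduct, ← Finset.sum_add_distrib]
  exact HasDerivAt.fun_sum fun i _ => (hasDerivAt_pi.1 hx i).mul (hasDerivAt_pi.1 hy i)

theorem hasDerivAt_mulVec {m : Type*} [Finite m] (A : Matrix m d 𝕜) {x : 𝕜 → d → 𝕜}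
    {x' : d → 𝕜} {t : 𝕜} (hx : HasDerivAt x x' t) :
    HasDerivAt (fun s => A *ᵥ x s) (A *ᵥ x') t := by
  cases nonempty_fintype m
  exact hasDerivAt_pi.2 fun i =>
    HasDerivAt.fun_sum fun j _ => (hasDerivAt_pi.1 hx j).const_mul (A i j)

theorem hasDerivAt_dotProduct_mulVec_self {A : Matrix d d 𝕜} (hA : A.IsSymm)
    {x : 𝕜 → d → 𝕜} {x' : d → 𝕜} {t : 𝕜} (hx : HasDerivAt x x' t) :
    HasDerivAt (fun s => x s ⬝ᵥ A *ᵥ x s) (2 * (x t ⬝ᵥ A *ᵥ x')) t := by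
  refine (hasDerivAt_dotProduct hx (hasDerivAt_mulVec A hx)).congr_deriv ?_
  rw [dotProduct_comm x', ← dotProduct_mulVec_eq_mulVec_dotProduct_of_isSymm hA, two_mul]

end Calculus

theorem integrableOn_dotProduct_of_continuousOn {X d : Type*} [Fintype d] [TopologicalSpace X]
    [T2Space X] [MeasurableSpace X] [OpensMeasurableSpace X] {μ : Measure X} {s : Set X}
    {x y : X → d → ℝ} (hs : IsCompact s) (hx : ContinuousOn x s) (hy : IntegrableOn y s μ) :
    IntegrableOn (fun p => x p ⬝ᵥ y p) s μ :=
  integrable_finsetSum _ fun i _ =>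
    IntegrableOn.continuousOn_mul (continuousOn_pi.1 hx i) (Integrable.eval hy i) hs

theorem sub_le_integral_of_exists_hasDerivAt_le {W φ : ℝ → ℝ} {a b t : ℝ}
    (hW : ContinuousOn W (Set.Icc a b)) (hφ : IntegrableOn φ (Set.Icc a b))
    (hle : ∀ s ∈ Set.Ioo a b, ∃ w, HasDerivAt W w s ∧ w ≤ φ s) (ht : t ∈ Set.Icc a b) :
    W t - W a ≤ ∫ s in a..t, φ s := by
  choose! w hderiv hwφ using hle
  have hIcc : Set.Icc a t ⊆ Set.Icc a b := Set.Icc_subset_Icc_right ht.2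
  have hIoo : Set.Ioo a t ⊆ Set.Ioo a b := Set.Ioo_subset_Ioo_right ht.2
  exact intervalIntegral.sub_le_integral_of_hasDeriv_right_of_le ht.1 (hW.mono hIcc)
    (fun s hs => (hderiv s (hIoo hs)).hasDerivWithinAt) (hφ.mono_set hIcc)
    (fun s hs => hwφ s (hIoo hs))

section GeneralisedMaxwell

variable {d ι : Type*} [Fintype d]

theorem dotProduct_neg_mulVec_sub_le {R : Matrix d d ℝ} (hR : R.PosSemidef) (F v : d → ℝ) :
    F ⬝ᵥ (-(R *ᵥ F) - v) ≤ -(F ⬝ᵥ v) := by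
  rw [dotProduct_sub, dotProduct_neg]
  linarith [dotProduct_mulVec_nonneg_of_posSemidef hR F]

/-- The total bristle force of a spring of stiffness `K₀` at deflection `z` in parallel with
Maxwell elements carrying the forces `f i`. -/
def bristleForce [Fintype ι] (K₀ : Matrix d d ℝ) (z : d → ℝ) (f : ι → d → ℝ) : d → ℝ :=
  K₀ *ᵥ z + ∑ i, f i

theorem continuous_bristleForce [Fintype ι] (K₀ : Matrix d d ℝ) :
    Continuous fun p : (d → ℝ) × (ι → d → ℝ) => bristleForce K₀ p.1 p.2 := by
  unfold bristleForce
  fun_prop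

variable [DecidableEq d]

/-- The rate of change `-τ⁻¹ x + K u`, with `τ = C K⁻¹`, of the force `x` in a Maxwell element of
stiffness `K` and damping `C` stretched at rate `u`. -/
noncomputable def maxwellRate (K C : Matrix d d ℝ) (x u : d → ℝ) : d → ℝ :=
  -((C * K⁻¹)⁻¹ *ᵥ x) + K *ᵥ u

theorem inv_mulVec_maxwellRate {K : Matrix d d ℝ} (hK : IsUnit K) (C : Matrix d d ℝ)
    (x u : d → ℝ) : K⁻¹ *ᵥ maxwellRate K C x u = u - C⁻¹ *ᵥ x := by
  have hdet : IsUnit K.det := (isUnit_iff_isUnit_det K).1 hK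
  rw [maxwellRate, Matrix.mul_inv_rev, nonsing_inv_nonsing_inv K hdet, mulVec_add, mulVec_neg,
    mulVec_mulVec, mulVec_mulVec, nonsing_inv_mul_cancel_left K _ hdet, nonsing_inv_mul K hdet,
    one_mulVec, neg_add_eq_sub]

variable [Fintype ι]

/-- The elastic energy stored in a spring of stiffness `K₀` at deflection `z` in parallel with
Maxwell elements; the energy of the `i`-th element is expressed through its force `f i` and
compliance `(K i)⁻¹`. -/
noncomputable def gmStorage (K₀ : Matrix d d ℝ) (K : ι → Matrix d d ℝ) (z : d → ℝ)
    (f : ι → d → ℝ) : ℝ :=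
  (1/2) * (z ⬝ᵥ K₀ *ᵥ z) + (1/2) * ∑ i, f i ⬝ᵥ (K i)⁻¹ *ᵥ f i

theorem continuous_gmStorage (K₀ : Matrix d d ℝ) (K : ι → Matrix d d ℝ) :
    Continuous fun p : (d → ℝ) × (ι → d → ℝ) => gmStorage K₀ K p.1 p.2 := by
  unfold gmStorage
  fun_prop

theorem hasDerivAt_gmStorage {K₀ : Matrix d d ℝ} {K C : ι → Matrix d d ℝ}
    (hK₀ : K₀.IsSymm) (hKsymm : ∀ i, (K i).IsSymm) (hKunit : ∀ i, IsUnit (K i))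
    {z : ℝ → d → ℝ} {f : ι → ℝ → d → ℝ} {u : d → ℝ} {t : ℝ} (hz : HasDerivAt z u t)
    (hf : ∀ i, HasDerivAt (f i) (maxwellRate (K i) (C i) (f i t) u) t) :
    HasDerivAt (fun s => gmStorage K₀ K (z s) fun i => f i s)
      (bristleForce K₀ (z t) (fun i => f i t) ⬝ᵥ u - ∑ i, f i t ⬝ᵥ (C i)⁻¹ *ᵥ f i t) t := by
  have hKinv (i : ι) : ((K i)⁻¹).IsSymm := by
    rw [IsSymm, transpose_nonsing_inv, (hKsymm i).eq]
  have hspring := (hasDerivAt_dotProduct_mulVec_self hK₀ hz).const_mul (1/2)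
  have hmaxwell := (HasDerivAt.fun_sum (u := Finset.univ) fun i _ =>
    hasDerivAt_dotProduct_mulVec_self (hKinv i) (hf i)).const_mul (1/2)
  refine (hspring.add hmaxwell).congr_deriv ?_
  simp only [inv_mulVec_maxwellRate (hKunit _),
    dotProduct_mulVec_eq_mulVec_dotProduct_of_isSymm hK₀, bristleForce, dotProduct_sub,
    add_dotProduct, sum_dotProduct, ← Finset.mul_sum, Finset.sum_sub_distrib]
  ring

theorem exists_hasDerivAt_gmStorage_le {K₀ R : Matrix d d ℝ} {K C : ι → Matrix d d ℝ}
    (hK₀ : K₀.IsSymm) (hKsymm : ∀ i, (K i).IsSymm) (hKunit : ∀ i, IsUnit (K i))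
    (hC : ∀ i, (C i).PosDef) (hR : R.PosSemidef)
    {z : ℝ → d → ℝ} {f : ι → ℝ → d → ℝ} {u v : d → ℝ} {t : ℝ}
    (hu : u = -(R *ᵥ bristleForce K₀ (z t) fun i => f i t) - v) (hz : HasDerivAt z u t)
    (hf : ∀ i, HasDerivAt (f i) (maxwellRate (K i) (C i) (f i t) u) t) :
    ∃ w, HasDerivAt (fun s => gmStorage K₀ K (z s) fun i => f i s) w t ∧
      w ≤ -(bristleForce K₀ (z t) (fun i => f i t) ⬝ᵥ v) := by
  refine ⟨_, hasDerivAt_gmStorage hK₀ hKsymm hKunit hz hf, ?_⟩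
  have hfriction : bristleForce K₀ (z t) (fun i => f i t) ⬝ᵥ u ≤
      -(bristleForce K₀ (z t) (fun i => f i t) ⬝ᵥ v) :=
    hu ▸ dotProduct_neg_mulVec_sub_le hR _ v
  have hdamping : 0 ≤ ∑ i, f i t ⬝ᵥ (C i)⁻¹ *ᵥ f i t :=
    Finset.sum_nonneg fun i _ => dotProduct_mulVec_nonneg_of_posSemidef (hC i).inv.posSemidef _
  linarith

theorem frbd_gm_lumped_passivity_general {K₀ : Matrix d d ℝ} {K C : ι → Matrix d d ℝ}
    (hK₀ : K₀.IsSymm) (hKsymm : ∀ i, (K i).IsSymm) (hKunit : ∀ i, IsUnit (K i))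
    (hC : ∀ i, (C i).PosDef) {a b : ℝ} {R : ℝ → Matrix d d ℝ}
    (hR : ∀ t ∈ Set.Ioo a b, (R t).PosSemidef)
    {v z u : ℝ → d → ℝ} {f : ι → ℝ → d → ℝ} (hv : IntegrableOn v (Set.Icc a b))
    (hzcont : ContinuousOn z (Set.Icc a b)) (hfcont : ∀ i, ContinuousOn (f i) (Set.Icc a b))
    (hu : ∀ t ∈ Set.Ioo a b, u t = -(R t *ᵥ bristleForce K₀ (z t) fun i => f i t) - v t)
    (hz : ∀ t ∈ Set.Ioo a b, HasDerivAt z (u t) t)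
    (hf : ∀ i, ∀ t ∈ Set.Ioo a b,
      HasDerivAt (f i) (maxwellRate (K i) (C i) (f i t) (u t)) t) :
    let W : ℝ → ℝ := fun t => gmStorage K₀ K (z t) fun i => f i t
    (∀ t ∈ Set.Ioo a b, ∃ w : ℝ, HasDerivAt W w t ∧
        w ≤ -(bristleForce K₀ (z t) (fun i => f i t) ⬝ᵥ v t)) ∧
    (∀ t ∈ Set.Icc a b,
      W t - W a ≤ ∫ s in a..t, -(bristleForce K₀ (z s) (fun i => f i s) ⬝ᵥ v s)) := by
  intro W
  have hrate : ∀ t ∈ Set.Ioo a b, ∃ w : ℝ, HasDerivAt W w t ∧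
      w ≤ -(bristleForce K₀ (z t) (fun i => f i t) ⬝ᵥ v t) := fun t ht =>
    exists_hasDerivAt_gmStorage_le hK₀ hKsymm hKunit hC (hR t ht) (hu t ht) (hz t ht)
      fun i => hf i t ht
  have hstate : ContinuousOn (fun t => (z t, fun i => f i t)) (Set.Icc a b) :=
    hzcont.prodMk (continuousOn_pi.2 hfcont)
  have hW : ContinuousOn W (Set.Icc a b) := (continuous_gmStorage K₀ K).comp_continuousOn hstate
  have hF : ContinuousOn (fun t => bristleForce K₀ (z t) fun i => f i t) (Set.Icc a b) :=
    (continuous_bristleForce K₀).comp_continuousOn hstate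
  have hpower := (integrableOn_dotProduct_of_continuousOn isCompact_Icc hF hv).neg
  exact ⟨hrate, fun t ht => sub_le_integral_of_exists_hasDerivAt_le hW hpower hrate ht⟩

end GeneralisedMaxwell

/-- The matrix `‖M(v) v‖_{2,ε} M(v)⁻²` that multiplies the bristle force in `zRhs`; it maps a force
to the sliding velocity it produces. -/
noncomputable def slidingMobility (M : (Fin 2 → ℝ) → Matrix (Fin 2) (Fin 2) ℝ) (ε : ℝ)
    (v : Fin 2 → ℝ) : Matrix (Fin 2) (Fin 2) ℝ :=
  regNorm ε (M v *ᵥ v) • (M v * M v)⁻¹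

theorem zRhs_eq_neg_slidingMobility_mulVec_sub (M : (Fin 2 → ℝ) → Matrix (Fin 2) (Fin 2) ℝ)
    (ε : ℝ) (v F : Fin 2 → ℝ) : zRhs M ε v F = -(slidingMobility M ε v *ᵥ F) - v := by
  rw [zRhs, slidingMobility, smul_mulVec]

theorem posSemidef_slidingMobility {M : (Fin 2 → ℝ) → Matrix (Fin 2) (Fin 2) ℝ}
    {v : Fin 2 → ℝ} (hM : (M v).IsHermitian) (ε : ℝ) : (slidingMobility M ε v).PosSemidef := by
  have hsq : (M v * M v).PosSemidef := by
    simpa only [hM.eq] using posSemidef_conjTranspose_mul_self (M v)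
  exact hsq.inv.smul (Real.sqrt_nonneg _)

/-- Passivity of the lumped FrBD_{n+1}-GM model. -/
theorem frbd_gm_lumped_passivity (n : ℕ)
    (K₀ : Matrix (Fin 2) (Fin 2) ℝ) (K C : Fin n → Matrix (Fin 2) (Fin 2) ℝ)
    (hK₀ : K₀.PosDef) (hK : ∀ i, (K i).PosDef) (hC : ∀ i, (C i).PosDef)
    (M : (Fin 2 → ℝ) → Matrix (Fin 2) (Fin 2) ℝ) (hM : ∀ y, (M y).PosDef)
    (ε : ℝ) (hε : 0 ≤ ε) (T : ℝ) (hT : 0 < T)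
    (vr : ℝ → (Fin 2 → ℝ)) (hvr : ContinuousOn vr (Set.Icc 0 T))
    (z : ℝ → (Fin 2 → ℝ)) (f : Fin n → ℝ → (Fin 2 → ℝ))
    (hzdiff : DifferentiableOn ℝ z (Set.Icc 0 T))
    (hfdiff : ∀ i, DifferentiableOn ℝ (f i) (Set.Icc 0 T))
    (hz : ∀ t ∈ Set.Ioo 0 T,
      HasDerivAt z (zRhs M ε (vr t) (K₀.mulVec (z t) + ∑ i, f i t)) t)
    (hf : ∀ i, ∀ t ∈ Set.Ioo 0 T,
      HasDerivAt (f i)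
        (-((C i * (K i)⁻¹)⁻¹.mulVec (f i t)) +
          (K i).mulVec (zRhs M ε (vr t) (K₀.mulVec (z t) + ∑ i, f i t))) t) :
    let W : ℝ → ℝ := fun t =>
      (1/2) * (z t ⬝ᵥ K₀.mulVec (z t)) +
      (1/2) * ∑ i, f i t ⬝ᵥ (K i)⁻¹.mulVec (f i t)
    (∀ t ∈ Set.Ioo 0 T, ∃ w : ℝ, HasDerivAt W w t ∧
        w ≤ -((K₀.mulVec (z t) + ∑ i, f i t) ⬝ᵥ vr t)) ∧
    (∀ t ∈ Set.Icc 0 T,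
      W t - W 0 ≤ ∫ t' in (0:ℝ)..t, -((K₀.mulVec (z t') + ∑ i, f i t') ⬝ᵥ vr t')) :=
  frbd_gm_lumped_passivity_general
    (isHermitian_iff_isSymm.1 hK₀.isHermitian)
    (fun i => isHermitian_iff_isSymm.1 (hK i).isHermitian) (fun i => (hK i).isUnit) hC
    (fun t _ => posSemidef_slidingMobility (hM (vr t)).isHermitian ε) hvr.integrableOn_Icc
    hzdiff.continuousOn (fun i => (hfdiff i).continuousOn)
    (fun _ _ => zRhs_eq_neg_slidingMobility_mulVec_sub M ε _ _) hz hf
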